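/- arXiv:1812.11086 — 4 statements merged into one kernel-verified Lean document; each statement's English description precedes it below -/
import Mathlib

section
/- Let A be a C*-algebra and I a closed two-sided ideal of A. Then there exists u ∈ A such that u·x = x and x·u = x for all x ∈ I if and only if there exists a closed two-sided ideal J of A such that x·y = 0 for all x ∈ I and y ∈ J and the quotient A/J is unital, i.e. there exists v ∈ A with v·a − a ∈ J and a·v − a ∈ J for all a ∈ A. -/
/-!
If `u` acts as a unit on a right ideal `I`, then `u` is a unit modulo the right annihilator of `I`:
for `x ∈ I`, both `x * (u * a - a) = (x * u - x) * a` and `x * (a * u - a) = (x * a) * u - x * a`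
vanish.

Conversely, let `I * J = 0` and let `v` be a left unit modulo `J`. For `x ∈ I`, the element
`z = x * v - x` satisfies `z * a = x * (v * a - a) = 0` for all `a`. The element `z = v * x - x`
lies in `J`, so `z * (a * z) = v * (x * (a * z)) - x * (a * z) = 0` for all `a`. In a semiprime
ring, such as a C*-algebra, both elements are therefore zero.
-/

/-- A closed two-sided ideal of a (possibly non-unital) C*-algebra, given as a set:
a topologically closed linear subspace absorbing multiplication on both sides. -/
structure IsClosedTwoSidedIdeal {A : Type*} [NonUnitalCStarAlgebra A] (I : Set A) : Prop where
  isClosed : IsClosed I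
  zero_mem : (0 : A) ∈ I
  add_mem : ∀ x y : A, x ∈ I → y ∈ I → x + y ∈ I
  smul_mem : ∀ (c : ℂ) (x : A), x ∈ I → c • x ∈ I
  mul_mem_left : ∀ a x : A, x ∈ I → a * x ∈ I
  mul_mem_right : ∀ a x : A, x ∈ I → x * a ∈ I

/-- A (possibly non-unital) ring is semiprime if `z A z = 0` forces `z = 0`. This makes a unit of
`A/J` act as a unit on `I` when `I * J = 0`; the elementwise form makes sense without a unit. -/
def IsSemiprimeRing (A : Type*) [Mul A] [Zero A] : Prop :=
  ∀ z : A, (∀ a : A, z * a * z = 0) → z = 0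

theorem isSemiprimeRing_of_cStarRing (A : Type*) [NonUnitalNormedRing A] [StarRing A]
    [CStarRing A] : IsSemiprimeRing A := by
  intro z hz
  have sq_eq_zero : star (star z * z) * (star z * z) = 0 := by
    rw [star_mul, star_star, mul_assoc, ← mul_assoc z, hz, mul_zero]
  exact (CStarRing.star_mul_self_eq_zero_iff z).mp
    ((CStarRing.star_mul_self_eq_zero_iff _).mp sq_eq_zero)

section UnitModulo

variable {A : Type*} [NonUnitalRing A] {J : Set A} {v x : A}

theorem IsSemiprimeRing.mul_left_eq_self_of_left_unit_mod (hA : IsSemiprimeRing A)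
    (hJ : ∀ a : A, ∀ y ∈ J, a * y ∈ J) (hv : v * x - x ∈ J) (hx : ∀ y ∈ J, x * y = 0) :
    v * x = x := by
  refine sub_eq_zero.mp (hA _ fun a => ?_)
  have x_mul_eq_zero : x * (a * (v * x - x)) = 0 := hx _ (hJ a _ hv)
  rw [mul_assoc, sub_mul, mul_assoc v, x_mul_eq_zero, mul_zero, sub_zero]

theorem IsSemiprimeRing.mul_right_eq_self_of_left_unit_mod (hA : IsSemiprimeRing A)
    (hv : ∀ a : A, v * a - a ∈ J) (hx : ∀ y ∈ J, x * y = 0) : x * v = x := by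
  have sub_mul_eq_zero (a : A) : (x * v - x) * a = 0 := by
    rw [sub_mul, mul_assoc, ← mul_sub, hx _ (hv a)]
  exact sub_eq_zero.mp (hA _ fun a => by rw [sub_mul_eq_zero, zero_mul])

end UnitModulo

section RightAnnihilator

/-- The right annihilator `{y | I * y = 0}` of a subset `I` of an algebra. It is bundled as a
submodule because closed ideals of a C*-algebra are required to be linear subspaces. -/
def rightAnnihilator (R : Type*) {A : Type*} [Semiring R] [NonUnitalNonAssocSemiring A]
    [Module R A] [SMulCommClass R A A] (I : Set A) : Submodule R A where
  carrier := {y | ∀ x ∈ I, x * y = 0}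
  zero_mem' x _ := mul_zero x
  add_mem' hy hz x hx := by rw [mul_add, hy x hx, hz x hx, add_zero]
  smul_mem' c y hy x hx := by rw [mul_smul_comm, hy x hx, smul_zero]

variable {R A : Type*} [Semiring R] {I : Set A}

theorem mem_rightAnnihilator [NonUnitalNonAssocSemiring A] [Module R A] [SMulCommClass R A A]
    {y : A} : y ∈ rightAnnihilator R I ↔ ∀ x ∈ I, x * y = 0 :=
  Iff.rfl

theorem isClosed_rightAnnihilator [NonUnitalNonAssocSemiring A] [Module R A] [SMulCommClass R A A]
    [TopologicalSpace A] [T1Space A] [SeparatelyContinuousMul A] :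
    IsClosed (rightAnnihilator R I : Set A) := by
  have eq_iInter : (rightAnnihilator R I : Set A) = ⋂ x ∈ I, (x * ·) ⁻¹' {0} := by
    ext y
    simp only [SetLike.mem_coe, mem_rightAnnihilator, Set.mem_iInter, Set.mem_preimage,
      Set.mem_singleton_iff]
  rw [eq_iInter]
  exact isClosed_biInter fun x _ => isClosed_singleton.preimage (continuous_const_mul x)

theorem mul_right_mem_rightAnnihilator [NonUnitalSemiring A] [Module R A] [SMulCommClass R A A]
    {y : A} (hy : y ∈ rightAnnihilator R I) (a : A) : y * a ∈ rightAnnihilator R I :=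
  fun x hx => by rw [← mul_assoc, hy x hx, zero_mul]

theorem mul_left_mem_rightAnnihilator [NonUnitalSemiring A] [Module R A] [SMulCommClass R A A]
    (hI : ∀ x ∈ I, ∀ a : A, x * a ∈ I) {y : A} (hy : y ∈ rightAnnihilator R I) (a : A) :
    a * y ∈ rightAnnihilator R I :=
  fun x hx => by rw [← mul_assoc, hy _ (hI x hx a)]

theorem left_mul_sub_mem_rightAnnihilator [NonUnitalRing A] [Module R A] [SMulCommClass R A A]
    {u : A} (hu : ∀ x ∈ I, x * u = x) (a : A) : u * a - a ∈ rightAnnihilator R I :=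
  fun x hx => by rw [mul_sub, ← mul_assoc, hu x hx, sub_self]

theorem right_mul_sub_mem_rightAnnihilator [NonUnitalRing A] [Module R A] [SMulCommClass R A A]
    (hI : ∀ x ∈ I, ∀ a : A, x * a ∈ I) {u : A} (hu : ∀ x ∈ I, x * u = x) (a : A) :
    a * u - a ∈ rightAnnihilator R I :=
  fun x hx => by rw [mul_sub, ← mul_assoc, hu _ (hI x hx a), sub_self]

end RightAnnihilator

theorem exists_local_unit_iff_exists_orthogonal_ideal_with_unital_quotient_general
    (R : Type*) {A : Type*} [Semiring R] [NonUnitalRing A] [Module R A] [SMulCommClass R A A]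
    [TopologicalSpace A] [T1Space A] [SeparatelyContinuousMul A] (hA : IsSemiprimeRing A)
    {I : Set A} (hI : ∀ x ∈ I, ∀ a : A, x * a ∈ I) :
    (∃ u : A, ∀ x ∈ I, u * x = x ∧ x * u = x) ↔
      ∃ J : Submodule R A, (IsClosed (J : Set A) ∧ ∀ a : A, ∀ y ∈ J, a * y ∈ J ∧ y * a ∈ J) ∧
        (∀ x ∈ I, ∀ y ∈ J, x * y = 0) ∧ ∃ v : A, ∀ a : A, v * a - a ∈ J ∧ a * v - a ∈ J := by
  constructor
  · rintro ⟨u, hu⟩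
    have hu_right : ∀ x ∈ I, x * u = x := fun x hx => (hu x hx).2
    exact ⟨rightAnnihilator R I,
      ⟨isClosed_rightAnnihilator, fun a y hy =>
        ⟨mul_left_mem_rightAnnihilator hI hy a, mul_right_mem_rightAnnihilator hy a⟩⟩,
      fun x hx y hy => hy x hx,
      u, fun a => ⟨left_mul_sub_mem_rightAnnihilator hu_right a,
        right_mul_sub_mem_rightAnnihilator hI hu_right a⟩⟩
  · rintro ⟨J, ⟨-, hJ⟩, hIJ, v, hv⟩
    have hJ_left : ∀ a : A, ∀ y ∈ J, a * y ∈ J := fun a y hy => (hJ a y hy).1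
    have hv_left : ∀ a : A, v * a - a ∈ J := fun a => (hv a).1
    exact ⟨v, fun x hx =>
      ⟨hA.mul_left_eq_self_of_left_unit_mod hJ_left (hv_left x) (hIJ x hx),
        hA.mul_right_eq_self_of_left_unit_mod hv_left (hIJ x hx)⟩⟩

theorem isClosedTwoSidedIdeal_iff_exists_submodule {A : Type*} [NonUnitalCStarAlgebra A]
    {J : Set A} :
    IsClosedTwoSidedIdeal J ↔ ∃ K : Submodule ℂ A,
      (IsClosed (K : Set A) ∧ ∀ a : A, ∀ y ∈ K, a * y ∈ K ∧ y * a ∈ K) ∧ K = J := by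
  constructor
  · intro hJ
    exact ⟨⟨⟨⟨J, hJ.add_mem _ _⟩, hJ.zero_mem⟩, hJ.smul_mem⟩,
      ⟨hJ.isClosed, fun a y hy => ⟨hJ.mul_mem_left a y hy, hJ.mul_mem_right a y hy⟩⟩, rfl⟩
  · rintro ⟨K, ⟨hclosed, hmul⟩, rfl⟩
    exact ⟨hclosed, K.zero_mem, fun _ _ => K.add_mem, fun c _ => K.smul_mem c,
      fun a y hy => (hmul a y hy).1, fun a y hy => (hmul a y hy).2⟩

/-- For a closed two-sided ideal `I` of a C*-algebra `A`, there is `u ∈ A`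
acting as a unit on `I` if and only if there is a closed two-sided ideal `J` with `I·J = 0`
and `A/J` unital. -/
theorem exists_local_unit_iff_exists_orthogonal_ideal_with_unital_quotient
    {A : Type*} [NonUnitalCStarAlgebra A] {I : Set A} (hI : IsClosedTwoSidedIdeal I) :
    (∃ u : A, ∀ x ∈ I, u * x = x ∧ x * u = x) ↔
      ∃ J : Set A, IsClosedTwoSidedIdeal J ∧ (∀ x ∈ I, ∀ y ∈ J, x * y = 0) ∧
        ∃ v : A, ∀ a : A, v * a - a ∈ J ∧ a * v - a ∈ J := by
  rw [exists_local_unit_iff_exists_orthogonal_ideal_with_unital_quotient_general ℂ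
    (isSemiprimeRing_of_cStarRing A) fun x hx a => hI.mul_mem_right a x hx]
  simp only [isClosedTwoSidedIdeal_iff_exists_submodule, exists_exists_and_eq_and, SetLike.mem_coe]
end

section
/- Every infinite-dimensional C*-algebra A contains an infinite sequence {B_n}_{n∈ℕ} of mutually orthogonal nonzero hereditary C*-subalgebras: each B_n is a nonzero closed *-subalgebra of A that is hereditary, and x·y = 0 whenever x ∈ B_n, y ∈ B_m and n ≠ m. -/
/-!
Annihilators `T⊥ = {x | x t = t x = 0 for all t ∈ T}` of star-closed sets are hereditary
C*-subalgebras, and if self-adjoint `a` and `b` satisfy `a b = 0` then `{a}⊥⊥` and `{b}⊥⊥` are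
orthogonal. So it suffices to find infinitely many pairwise orthogonal nonzero self-adjoint
elements.

If some nonzero self-adjoint `a` is such that every `{b}⊥⊥ ⊆ {a}⊥⊥` contains two orthogonal nonzero
self-adjoint elements, repeated splitting yields such a sequence. Otherwise every `{a}⊥⊥` contains
a `{b}⊥⊥` whose self-adjoint part has no zero divisors. There the functional calculus leaves room
for only one nonzero spectral value, so `y² = μ y` for every self-adjoint `y`, and a multiple of `b`
is a projection `p` with `p A p = ℂ p`. Take a maximal set of pairwise orthogonal such projections.
If it is finite, its sum is a unit of `A` because nothing is orthogonal to it, and then `A` is the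
sum of the finitely many spaces `p A q`, each of dimension at most one.
-/

/-- A hereditary C*-subalgebra of `A`, given as a set: a closed *-subalgebra `B` such that
`a ∈ A`, `b ∈ B` and `0 ≤ a ≤ b` imply `a ∈ B`. -/
structure IsHereditarySubalgebra {A : Type*} [NonUnitalCStarAlgebra A]
    [PartialOrder A] [StarOrderedRing A] (B : Set A) : Prop where
  isClosed : IsClosed B
  zero_mem : (0 : A) ∈ B
  add_mem : ∀ x y : A, x ∈ B → y ∈ B → x + y ∈ B
  smul_mem : ∀ (c : ℂ) (x : A), x ∈ B → c • x ∈ B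
  mul_mem : ∀ x y : A, x ∈ B → y ∈ B → x * y ∈ B
  star_mem : ∀ x : A, x ∈ B → star x ∈ B
  hereditary : ∀ a b : A, b ∈ B → 0 ≤ a → a ≤ b → a ∈ B

section Sequences

variable {α : Type*}

theorem exists_seq_pairwise_of_forall_exists_le {β : Type*} [Nonempty α] [Preorder β] (f : α → β)
    {r : α → α → Prop} [Std.Symm r]
    (hmono : ∀ {a b c}, r a b → f c ≤ f b → r a c)
    (hsplit : ∀ a, ∃ b c, f b ≤ f a ∧ f c ≤ f a ∧ r b c) :
    ∃ s : ℕ → α, Pairwise fun m n => r (s m) (s n) := by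
  choose keep rest hkeep hrest hr using hsplit
  obtain ⟨a⟩ := ‹Nonempty α›
  have hanti : Antitone fun n => f (rest^[n] a) := antitone_nat_of_succ_le fun n => by
    rw [Function.iterate_succ_apply']
    exact hrest _
  refine ⟨fun n => keep (rest^[n] a), (Std.Symm.pairwise_on _).2 fun m n hmn => ?_⟩
  have hle : f (rest^[n] a) ≤ f (rest (rest^[m] a)) := by
    rw [← Function.iterate_succ_apply' rest]
    exact hanti hmn
  exact hmono (hr _) ((hkeep _).trans hle)

theorem exists_maximal_set_pairwise (r : α → α → Prop) :
    ∃ S : Set α, Maximal (fun S : Set α => S.Pairwise r) S :=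
  zorn_subset {S : Set α | S.Pairwise r} fun c hc hchain =>
    ⟨⋃₀ c, (Set.pairwise_sUnion hchain.directedOn).2 fun _ hs => hc hs,
      fun _ => Set.subset_sUnion_of_mem⟩

theorem exists_seq_pairwise_or_exists_maximal_finset (r : α → α → Prop) [Std.Symm r] :
    (∃ s : ℕ → α, Pairwise fun m n => r (s m) (s n)) ∨
      ∃ F : Finset α, (F : Set α).Pairwise r ∧ ∀ x, (∀ y ∈ F, r x y) → x ∈ F := by
  obtain ⟨S, hS⟩ := exists_maximal_set_pairwise r
  obtain hfin | hinf := S.finite_or_infinite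
  · lift S to Finset α using hfin
    refine .inr ⟨S, hS.prop, fun x hx => ?_⟩
    have hins : (insert x (S : Set α)).Pairwise r :=
      hS.prop.insert fun y hy _ => ⟨hx y hy, symm (hx y hy)⟩
    exact hS.le_of_ge hins (Set.subset_insert x _) (Set.mem_insert x _)
  · let s := hinf.natEmbedding
    exact .inl ⟨fun n => s n, fun m n hmn =>
      hS.prop (s m).2 (s n).2 (Subtype.coe_injective.ne (s.injective.ne hmn))⟩

end Sequences

section TwoSidedAnnihilator

/-- The two-sided annihilator of `S`: the elements whose products with every element of `S`, in
either order, vanish. It supplies all the hereditary subalgebras constructed below. -/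
def twoSidedAnnihilator {R : Type*} [Mul R] [Zero R] (S : Set R) : Set R :=
  {x | ∀ s ∈ S, x * s = 0 ∧ s * x = 0}

/-- The annihilator of the annihilator of `{a}`; for self-adjoint `a` it replaces the hereditary
subalgebra generated by `a`, which it contains. -/
def doubleAnnihilator {R : Type*} [Mul R] [Zero R] (a : R) : Set R :=
  twoSidedAnnihilator (twoSidedAnnihilator {a})

section Mul

variable {R : Type*} [Mul R] [Zero R] {a b x y : R}

theorem mem_twoSidedAnnihilator_singleton :
    x ∈ twoSidedAnnihilator {a} ↔ x * a = 0 ∧ a * x = 0 := by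
  simp [twoSidedAnnihilator]

theorem self_mem_doubleAnnihilator (a : R) : a ∈ doubleAnnihilator a := fun _ hs =>
  (mem_twoSidedAnnihilator_singleton.1 hs).symm

theorem doubleAnnihilator_subset (h : b ∈ doubleAnnihilator a) :
    doubleAnnihilator b ⊆ doubleAnnihilator a := fun _ hx s hs =>
  hx s (mem_twoSidedAnnihilator_singleton.2 (h s hs).symm)

theorem mul_eq_zero_of_mem_doubleAnnihilator (hab : a * b = 0) (hba : b * a = 0)
    (hx : x ∈ doubleAnnihilator a) (hy : y ∈ doubleAnnihilator b) : x * y = 0 :=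
  (hy x (mem_twoSidedAnnihilator_singleton.2
    (hx b (mem_twoSidedAnnihilator_singleton.2 ⟨hba, hab⟩)))).2

end Mul

theorem mul_mul_mem_twoSidedAnnihilator {R : Type*} [SemigroupWithZero R] {S : Set R} {x z : R}
    (hx : x ∈ twoSidedAnnihilator S) (hz : z ∈ twoSidedAnnihilator S) (y : R) :
    x * y * z ∈ twoSidedAnnihilator S := fun s hs =>
  ⟨by rw [mul_assoc, (hz s hs).1, mul_zero],
    by rw [← mul_assoc, ← mul_assoc, (hx s hs).2, zero_mul, zero_mul]⟩

theorem smul_mem_twoSidedAnnihilator {M R : Type*} [Mul R] [Zero R] [SMulZeroClass M R]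
    [IsScalarTower M R R] [SMulCommClass M R R] {S : Set R} {x : R} (c : M)
    (hx : x ∈ twoSidedAnnihilator S) : c • x ∈ twoSidedAnnihilator S := fun s hs =>
  ⟨by rw [smul_mul_assoc, (hx s hs).1, smul_zero], by rw [mul_smul_comm, (hx s hs).2, smul_zero]⟩

section Star

variable {R : Type*} [NonUnitalSemiring R] [StarRing R] {S : Set R} {x : R}

theorem star_mem_twoSidedAnnihilator (hS : ∀ s ∈ S, star s ∈ S)
    (hx : x ∈ twoSidedAnnihilator S) : star x ∈ twoSidedAnnihilator S := fun s hs =>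
  ⟨by simpa using congrArg star (hx _ (hS s hs)).2, by simpa using congrArg star (hx _ (hS s hs)).1⟩

theorem star_mul_self_mem_twoSidedAnnihilator (hS : ∀ s ∈ S, IsSelfAdjoint s)
    (hx : ∀ s ∈ S, x * s = 0) : star x * x ∈ twoSidedAnnihilator S := fun s hs => by
  have hsx : s * star x = 0 := by simpa [(hS s hs).star_eq] using congrArg star (hx s hs)
  exact ⟨by rw [mul_assoc, hx s hs, mul_zero], by rw [← mul_assoc, hsx, zero_mul]⟩

theorem mul_eq_zero_symm_of_isSelfAdjoint {a b : R} (ha : IsSelfAdjoint a) (hb : IsSelfAdjoint b)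
    (h : a * b = 0) : b * a = 0 := by
  simpa [ha.star_eq, hb.star_eq] using congrArg star h

end Star

theorem isClosed_twoSidedAnnihilator {R : Type*} [Mul R] [Zero R] [TopologicalSpace R] [T1Space R]
    [SeparatelyContinuousMul R] (S : Set R) : IsClosed (twoSidedAnnihilator S) := by
  simp only [twoSidedAnnihilator, Set.ofPred_forall]
  exact isClosed_biInter fun s _ =>
    (isClosed_singleton.preimage (continuous_mul_const s)).inter
      (isClosed_singleton.preimage (continuous_const_mul s))

end TwoSidedAnnihilator

section HereditarySubalgebra

variable {A : Type*} [NonUnitalCStarAlgebra A] [PartialOrder A] [StarOrderedRing A]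

theorem mul_eq_zero_of_le_of_mul_eq_zero {a b t : A} (ha : 0 ≤ a) (hab : a ≤ b) (hbt : b * t = 0) :
    a * t = 0 := by
  obtain ⟨x, rfl⟩ := CStarAlgebra.nonneg_iff_eq_star_mul_self.1 ha
  have hle : star (x * t) * (x * t) ≤ 0 :=
    calc star (x * t) * (x * t) = star t * (star x * x) * t := by simp only [star_mul, mul_assoc]
      _ ≤ star t * b * t := star_left_conjugate_le_conjugate hab t
      _ = 0 := by rw [mul_assoc, hbt, mul_zero]
  have hxt : x * t = 0 :=
    (CStarRing.star_mul_self_eq_zero_iff _).1 (hle.antisymm (star_mul_self_nonneg _))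
  rw [mul_assoc, hxt, mul_zero]

theorem isHereditarySubalgebra_twoSidedAnnihilator {S : Set A} (hS : ∀ s ∈ S, star s ∈ S) :
    IsHereditarySubalgebra (twoSidedAnnihilator S) where
  isClosed := isClosed_twoSidedAnnihilator S
  zero_mem s _ := by simp
  add_mem x y hx hy s hs := by
    simp [add_mul, mul_add, (hx s hs).1, (hx s hs).2, (hy s hs).1, (hy s hs).2]
  smul_mem c _ := smul_mem_twoSidedAnnihilator c
  mul_mem x y hx hy s hs :=
    ⟨by rw [mul_assoc, (hy s hs).1, mul_zero], by rw [← mul_assoc, (hx s hs).2, zero_mul]⟩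
  star_mem _ := star_mem_twoSidedAnnihilator hS
  hereditary a b hb ha hab s hs := by
    have hmul : ∀ t ∈ S, a * t = 0 := fun t ht =>
      mul_eq_zero_of_le_of_mul_eq_zero ha hab (hb t ht).1
    refine ⟨hmul s hs, ?_⟩
    simpa [(IsSelfAdjoint.of_nonneg ha).star_eq] using congrArg star (hmul _ (hS s hs))

theorem isHereditarySubalgebra_doubleAnnihilator {a : A} (ha : IsSelfAdjoint a) :
    IsHereditarySubalgebra (doubleAnnihilator a) :=
  isHereditarySubalgebra_twoSidedAnnihilator fun _ =>
    star_mem_twoSidedAnnihilator (by simp [ha.star_eq])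

end HereditarySubalgebra

section Quasispectrum

variable {A : Type*} [NonUnitalRing A] [StarRing A] [TopologicalSpace A] [Module ℝ A]
  [IsScalarTower ℝ A A] [SMulCommClass ℝ A A]
  [NonUnitalContinuousFunctionalCalculus ℝ A IsSelfAdjoint] {y : A}

theorem mul_cfcₙ_mul_self (hy : IsSelfAdjoint y) {f : ℝ → ℝ} (hf : Continuous f) (hf0 : f 0 = 0) :
    y * cfcₙ f y * y = cfcₙ (fun t => t * f t * t) y := by
  rw [cfcₙ_mul (fun t => t * f t) (fun t => t) y, cfcₙ_mul (fun t => t) f y, cfcₙ_id' ℝ y]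

theorem mul_cfcₙ_mul_self_ne_zero (hy : IsSelfAdjoint y) {f : ℝ → ℝ} (hf : Continuous f)
    (hf0 : f 0 = 0) {μ : ℝ} (hμ : μ ∈ quasispectrum ℝ y) (hfμ : f μ ≠ 0) :
    y * cfcₙ f y * y ≠ 0 := by
  intro h
  rw [mul_cfcₙ_mul_self hy hf hf0, ← cfcₙ_zero ℝ y] at h
  have hzero : μ * f μ * μ = 0 :=
    eqOn_of_cfcₙ_eq_cfcₙ h hy (by fun_prop) (by simp) continuousOn_const rfl hμ
  have hμ0 : μ ≠ 0 := by
    rintro rfl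
    exact hfμ hf0
  exact mul_ne_zero (mul_ne_zero hμ0 hfμ) hμ0 hzero

theorem exists_orthogonal_compressions_of_lt_of_mem_quasispectrum (hy : IsSelfAdjoint y) {μ ν : ℝ}
    (hμ : μ ∈ quasispectrum ℝ y) (hν : ν ∈ quasispectrum ℝ y) (hμ0 : μ ≠ 0) (hν0 : ν ≠ 0)
    (hlt : μ < ν) :
    ∃ b c : A, IsSelfAdjoint b ∧ IsSelfAdjoint c ∧ y * b * y ≠ 0 ∧ y * c * y ≠ 0 ∧
      y * b * y * (y * c * y) = 0 := by
  obtain ⟨m, hμm, hmν⟩ := exists_between hlt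
  -- The extra factor `t` makes these vanish at `0`, as the non-unital calculus requires.
  let f : ℝ → ℝ := fun t => t * max 0 (m - t)
  let g : ℝ → ℝ := fun t => t * max 0 (t - m)
  have hf : Continuous f := by fun_prop
  have hg : Continuous g := by fun_prop
  have hf0 : f 0 = 0 := zero_mul _
  have hg0 : g 0 = 0 := zero_mul _
  have hfμ : f μ ≠ 0 := mul_ne_zero hμ0 (lt_max_of_lt_right (sub_pos.2 hμm)).ne'
  have hgν : g ν ≠ 0 := mul_ne_zero hν0 (lt_max_of_lt_right (sub_pos.2 hmν)).ne'
  have hfg : ∀ t, f t * g t = 0 := fun t => by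
    rcases le_total t m with h | h <;> simp [f, g, h]
  refine ⟨cfcₙ f y, cfcₙ g y, cfcₙ_predicate f y, cfcₙ_predicate g y,
    mul_cfcₙ_mul_self_ne_zero hy hf hf0 hμ hfμ, mul_cfcₙ_mul_self_ne_zero hy hg hg0 hν hgν, ?_⟩
  rw [mul_cfcₙ_mul_self hy hf hf0, mul_cfcₙ_mul_self hy hg hg0,
    ← cfcₙ_mul (fun t => t * f t * t) (fun t => t * g t * t) y, ← cfcₙ_zero ℝ y]
  refine cfcₙ_congr fun t _ => ?_
  calc t * f t * t * (t * g t * t) = t ^ 4 * (f t * g t) := by ring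
    _ = 0 := by rw [hfg, mul_zero]

theorem exists_mul_self_eq_smul_of_quasispectrum (hy : IsSelfAdjoint y)
    (h : ∀ μ ∈ quasispectrum ℝ y, ∀ ν ∈ quasispectrum ℝ y, μ ≠ 0 → ν ≠ 0 → μ = ν) :
    ∃ μ : ℝ, y * y = μ • y := by
  obtain ⟨μ, hμ⟩ : ∃ μ : ℝ, ∀ t ∈ quasispectrum ℝ y, t * t = μ * t := by
    by_cases hne : ∃ μ ∈ quasispectrum ℝ y, μ ≠ 0
    · obtain ⟨μ, hμ, hμ0⟩ := hne
      refine ⟨μ, fun t ht => ?_⟩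
      obtain rfl | ht0 := eq_or_ne t 0
      · simp
      · rw [h t ht μ hμ ht0 hμ0]
    · push Not at hne
      exact ⟨0, fun t ht => by simp [hne t ht]⟩
  refine ⟨μ, ?_⟩
  calc y * y = cfcₙ (fun t : ℝ => t * t) y := by
        rw [cfcₙ_mul (fun t => t) (fun t => t) y, cfcₙ_id' ℝ y]
    _ = cfcₙ (fun t : ℝ => μ * t) y := cfcₙ_congr hμ
    _ = μ • y := cfcₙ_const_mul_id μ y

end Quasispectrum

/-- A minimal projection in the algebraic sense `p A p = 𝕜 p`, which in a general C*-algebra is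
stronger than minimality of `p` among the nonzero projections. -/
structure IsMinimalProjection (𝕜 : Type*) {A : Type*} [Mul A] [Zero A] [Star A] [SMul 𝕜 A]
    (p : A) : Prop extends IsStarProjection p where
  ne_zero : p ≠ 0
  exists_smul_eq : ∀ x, ∃ c : 𝕜, p * x * p = c • p

section FiniteDimensional

variable {A : Type*} [NonUnitalNormedRing A] [StarRing A] [CStarRing A]

theorem eq_zero_of_forall_mul_eq_zero {S : Set A} (hS : ∀ s ∈ S, IsSelfAdjoint s)
    (hann : ∀ x ∈ twoSidedAnnihilator S, x = 0) {b : A} (hb : ∀ s ∈ S, b * s = 0) : b = 0 :=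
  (CStarRing.star_mul_self_eq_zero_iff b).1 (hann _ (star_mul_self_mem_twoSidedAnnihilator hS hb))

section Sum

variable {ι : Type*} [Fintype ι] {p : ι → A} (hp : ∀ i, IsStarProjection (p i))
  (horth : Pairwise fun i j => p i * p j = 0)
  (hann : ∀ x ∈ twoSidedAnnihilator (Set.range p), x = 0)

include hp horth hann

theorem mul_sum_eq_self_of_orthogonal (a : A) : a * ∑ i, p i = a := by
  have hsum : ∀ j, (∑ i, p i) * p j = p j := fun j => by
    rw [Finset.sum_mul, Fintype.sum_eq_single j fun i hij => horth hij,
      (hp j).isIdempotentElem.eq]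
  refine sub_eq_zero.1 (eq_zero_of_forall_mul_eq_zero
    (Set.forall_mem_range.2 fun i => (hp i).isSelfAdjoint) hann
    (Set.forall_mem_range.2 fun j => ?_))
  rw [sub_mul, mul_assoc, hsum, sub_self]

theorem sum_mul_eq_self_of_orthogonal (a : A) : (∑ i, p i) * a = a := by
  have hstar : star (∑ i, p i) = ∑ i, p i := by
    simp only [star_sum, fun i => (hp i).isSelfAdjoint.star_eq]
  simpa [hstar] using congrArg star (mul_sum_eq_self_of_orthogonal hp horth hann (star a))

theorem sum_sum_mul_mul_eq_self_of_orthogonal (a : A) : ∑ i, ∑ j, p i * a * p j = a := by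
  simp only [← Finset.mul_sum, mul_sum_eq_self_of_orthogonal hp horth hann, ← Finset.sum_mul,
    sum_mul_eq_self_of_orthogonal hp horth hann]

end Sum

variable {𝕜 : Type*} [Field 𝕜] [Module 𝕜 A] [IsScalarTower 𝕜 A A] [SMulCommClass 𝕜 A A]

theorem IsMinimalProjection.exists_forall_mul_mul_eq_smul {p q : A} (hp : IsMinimalProjection 𝕜 p)
    (hq : IsMinimalProjection 𝕜 q) : ∃ u : A, ∀ x, ∃ c : 𝕜, p * x * q = c • u := by
  by_cases h : ∀ x, p * x * q = 0
  · exact ⟨0, fun x => ⟨0, by simp [h x]⟩⟩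
  push Not at h
  obtain ⟨z, hz⟩ := h
  have hpp := hp.isIdempotentElem.eq
  have hqq := hq.isIdempotentElem.eq
  have hstar : star (p * z * q) = q * star z * p := by
    simp only [star_mul, hp.isSelfAdjoint.star_eq, hq.isSelfAdjoint.star_eq, mul_assoc]
  -- `u = p z q` satisfies `u⋆ u ∈ q A q = 𝕜 q`, so `p x q` is a multiple of `(p x q) u⋆ u`,
  -- which lies in `p A p u = 𝕜 u`.
  obtain ⟨l, hl⟩ : ∃ l : 𝕜, star (p * z * q) * (p * z * q) = l • q := by
    obtain ⟨l, hl⟩ := hq.exists_smul_eq (star z * p * z)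
    refine ⟨l, ?_⟩
    rw [← hl, hstar]
    simp only [mul_assoc]
    rw [← mul_assoc p p, hpp]
  have hl0 : l ≠ 0 := by
    rintro rfl
    rw [zero_smul] at hl
    exact hz ((CStarRing.star_mul_self_eq_zero_iff _).1 hl)
  refine ⟨p * z * q, fun x => ?_⟩
  obtain ⟨c, hc⟩ := hp.exists_smul_eq (x * q * star z)
  have hmul : l • (p * x * q) = c • (p * z * q) :=
    calc l • (p * x * q) = p * x * q * (l • q) := by rw [mul_smul_comm, mul_assoc (p * x), hqq]
      _ = p * (x * q * star z) * p * (p * z * q) := by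
          rw [← hl, hstar]
          simp only [mul_assoc]
          rw [← mul_assoc q q, hqq]
      _ = c • (p * z * q) := by rw [hc, smul_mul_assoc, ← mul_assoc, ← mul_assoc, hpp]
  exact ⟨l⁻¹ * c, by rw [mul_smul, ← hmul, inv_smul_smul₀ hl0]⟩

theorem finiteDimensional_of_isMinimalProjection {ι : Type*} [Finite ι] {p : ι → A}
    (hp : ∀ i, IsMinimalProjection 𝕜 (p i)) (horth : Pairwise fun i j => p i * p j = 0)
    (hann : ∀ x ∈ twoSidedAnnihilator (Set.range p), x = 0) : FiniteDimensional 𝕜 A := by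
  have := Fintype.ofFinite ι
  choose u hu using fun ij : ι × ι => (hp ij.1).exists_forall_mul_mul_eq_smul (hp ij.2)
  refine .of_fg_top (Submodule.fg_def.2 ⟨Set.range u, Set.finite_range u, ?_⟩)
  refine eq_top_iff.2 fun a _ => ?_
  rw [← sum_sum_mul_mul_eq_self_of_orthogonal (fun i => (hp i).toIsStarProjection) horth hann a]
  refine Submodule.sum_mem _ fun i _ => Submodule.sum_mem _ fun j _ => ?_
  obtain ⟨c, hc⟩ := hu (i, j) a
  rw [hc]
  exact Submodule.smul_mem _ _ (Submodule.subset_span (Set.mem_range_self _))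

end FiniteDimensional

section MinimalProjection

/-- No two nonzero self-adjoint elements of `B` have product zero. For an annihilator `B` in a
C*-algebra this is what makes a projection in `B` minimal. -/
def NoSelfAdjointZeroDivisors {A : Type*} [Mul A] [Zero A] [Star A] (B : Set A) : Prop :=
  ∀ b ∈ B, ∀ c ∈ B, IsSelfAdjoint b → IsSelfAdjoint c → b * c = 0 → b = 0 ∨ c = 0

section Module

variable {A : Type*} [NonUnitalRing A] [StarRing A]

theorem isStarProjection_inv_smul {𝕜 : Type*} [Field 𝕜] [StarRing 𝕜] [TrivialStar 𝕜] [Module 𝕜 A]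
    [StarModule 𝕜 A] [IsScalarTower 𝕜 A A] [SMulCommClass 𝕜 A A] {a : A} (ha : IsSelfAdjoint a)
    {μ : 𝕜} (hμ : μ ≠ 0) (h : a * a = μ • a) : IsStarProjection (μ⁻¹ • a) where
  isIdempotentElem := by
    rw [IsIdempotentElem, smul_mul_smul_comm, h, smul_smul, mul_assoc, inv_mul_cancel₀ hμ, mul_one]
  isSelfAdjoint := (IsSelfAdjoint.all μ⁻¹).smul ha

theorem exists_mul_mul_eq_smul_of_isSelfAdjoint [Module ℂ A] [StarModule ℂ A]
    [IsScalarTower ℂ A A] [SMulCommClass ℂ A A] {p : A}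
    (h : ∀ x : A, IsSelfAdjoint x → ∃ c : ℝ, p * x * p = c • p) (x : A) :
    ∃ c : ℂ, p * x * p = c • p := by
  obtain ⟨c, hc⟩ := h _ (realPart x).2
  obtain ⟨d, hd⟩ := h _ (imaginaryPart x).2
  refine ⟨c + Complex.I * d, ?_⟩
  calc p * x * p = p * realPart x * p + Complex.I • (p * imaginaryPart x * p) := by
        conv_lhs => rw [← realPart_add_I_smul_imaginaryPart x]
        rw [mul_add, add_mul, mul_smul_comm, smul_mul_assoc]
    _ = ((c : ℂ) + Complex.I * d) • p := by
        rw [hc, hd, add_smul, mul_smul, Complex.coe_smul, Complex.coe_smul]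

end Module

variable {A : Type*} [NonUnitalCStarAlgebra A] {S : Set A}

theorem NoSelfAdjointZeroDivisors.exists_mul_self_eq_smul
    (hS : NoSelfAdjointZeroDivisors (twoSidedAnnihilator S)) {y : A}
    (hyS : y ∈ twoSidedAnnihilator S) (hy : IsSelfAdjoint y) : ∃ μ : ℝ, y * y = μ • y := by
  have hnlt : ∀ μ ∈ quasispectrum ℝ y, ∀ ν ∈ quasispectrum ℝ y, μ ≠ 0 → ν ≠ 0 → ¬ μ < ν := by
    intro μ hμ ν hν hμ0 hν0 hlt
    obtain ⟨b, c, hb, hc, hb0, hc0, hbc⟩ :=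
      exists_orthogonal_compressions_of_lt_of_mem_quasispectrum hy hμ hν hμ0 hν0 hlt
    exact (hS _ (mul_mul_mem_twoSidedAnnihilator hyS hyS b) _
      (mul_mul_mem_twoSidedAnnihilator hyS hyS c) (hb.conjugate_self hy) (hc.conjugate_self hy)
      hbc).elim hb0 hc0
  exact exists_mul_self_eq_smul_of_quasispectrum hy fun μ hμ ν hν hμ0 hν0 =>
    le_antisymm
    (not_lt.1 (hnlt ν hν μ hμ hν0 hμ0)) (not_lt.1 (hnlt μ hμ ν hν hμ0 hν0))

theorem NoSelfAdjointZeroDivisors.isMinimalProjection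
    (hS : NoSelfAdjointZeroDivisors (twoSidedAnnihilator S)) {p : A}
    (hpS : p ∈ twoSidedAnnihilator S) (hp : IsStarProjection p) (hp0 : p ≠ 0) :
    IsMinimalProjection ℂ p where
  toIsStarProjection := hp
  ne_zero := hp0
  exists_smul_eq := by
    have hpp := hp.isIdempotentElem.eq
    refine exists_mul_mul_eq_smul_of_isSelfAdjoint fun x hx => ?_
    have hmem : ∀ y, p * y * p ∈ twoSidedAnnihilator S :=
      mul_mul_mem_twoSidedAnnihilator hpS hpS
    have hsa : ∀ {y}, IsSelfAdjoint y → IsSelfAdjoint (p * y * p) := fun hy =>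
      hy.conjugate_self hp.isSelfAdjoint
    obtain ⟨c, hc⟩ := hS.exists_mul_self_eq_smul (hmem x) (hsa hx)
    have hsub : p * (c • p - x) * p = c • p - p * x * p := by
      rw [mul_sub, sub_mul, mul_smul_comm, smul_mul_assoc, hpp, hpp]
    have horth : p * x * p * (p * (c • p - x) * p) = 0 := by
      rw [hsub, mul_sub, hc, mul_smul_comm, mul_assoc (p * x), hpp, sub_self]
    obtain h | h := hS _ (hmem x) _ (hmem (c • p - x)) (hsa hx)
      (hsa (((IsSelfAdjoint.all c).smul hp.isSelfAdjoint).sub hx)) horth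
    · exact ⟨0, by rw [h, zero_smul]⟩
    · exact ⟨c, (sub_eq_zero.1 (hsub.symm.trans h)).symm⟩

theorem NoSelfAdjointZeroDivisors.exists_isMinimalProjection
    (hS : NoSelfAdjointZeroDivisors (twoSidedAnnihilator S)) {a : A}
    (haS : a ∈ twoSidedAnnihilator S) (ha : IsSelfAdjoint a) (ha0 : a ≠ 0) :
    ∃ p ∈ twoSidedAnnihilator S, IsMinimalProjection ℂ p := by
  obtain ⟨μ, hμ⟩ := hS.exists_mul_self_eq_smul haS ha
  have hμ0 : μ ≠ 0 := by
    rintro rfl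
    have hstar : star a * a = 0 := by rw [ha.star_eq, hμ, zero_smul]
    exact ha0 ((CStarRing.star_mul_self_eq_zero_iff a).1 hstar)
  have hmem : μ⁻¹ • a ∈ twoSidedAnnihilator S := smul_mem_twoSidedAnnihilator μ⁻¹ haS
  exact ⟨μ⁻¹ • a, hmem, hS.isMinimalProjection hmem (isStarProjection_inv_smul ha hμ0 hμ)
    (smul_ne_zero (inv_ne_zero hμ0) ha0)⟩

end MinimalProjection

section OrthogonalFamily

/-- A family of nonzero self-adjoint elements with pairwise zero products. It generates mutually
orthogonal double annihilators. -/
structure IsOrthogonalFamily {ι A : Type*} [Mul A] [Zero A] [Star A] (s : ι → A) : Prop where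
  isSelfAdjoint : ∀ i, IsSelfAdjoint (s i)
  ne_zero : ∀ i, s i ≠ 0
  mul_eq_zero : Pairwise fun i j => s i * s j = 0

theorem exists_isOrthogonalFamily_of_forall_not_noSelfAdjointZeroDivisors {R : Type*}
    [NonUnitalSemiring R] [StarRing R] {a : R} (ha : IsSelfAdjoint a) (ha0 : a ≠ 0)
    (h : ∀ b ∈ doubleAnnihilator a, IsSelfAdjoint b → b ≠ 0 →
      ¬ NoSelfAdjointZeroDivisors (doubleAnnihilator b)) :
    ∃ s : ℕ → R, IsOrthogonalFamily s := by
  let T := {b : R // b ∈ doubleAnnihilator a ∧ IsSelfAdjoint b ∧ b ≠ 0}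
  have : Nonempty T := ⟨a, self_mem_doubleAnnihilator a, ha, ha0⟩
  have hsymm {b c : T} : b.1 * c.1 = 0 → c.1 * b.1 = 0 :=
    mul_eq_zero_symm_of_isSelfAdjoint b.2.2.1 c.2.2.1
  have : Std.Symm fun b c : T => b.1 * c.1 = 0 := ⟨fun _ _ => hsymm⟩
  obtain ⟨s, hs⟩ := exists_seq_pairwise_of_forall_exists_le (r := fun b c : T => b.1 * c.1 = 0)
    (fun b : T => doubleAnnihilator b.1)
    (fun {b c d} hbc hdc => mul_eq_zero_of_mem_doubleAnnihilator hbc (hsymm hbc)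
      (self_mem_doubleAnnihilator b.1)
      (Set.mem_of_subset_of_mem hdc (self_mem_doubleAnnihilator d.1)))
    (by
      rintro ⟨b, hb, hbsa, hb0⟩
      have hzero := h b hb hbsa hb0
      simp only [NoSelfAdjointZeroDivisors, not_forall, not_or] at hzero
      obtain ⟨x, hx, y, hy, hxsa, hysa, hxy, hx0, hy0⟩ := hzero
      exact ⟨⟨x, doubleAnnihilator_subset hb hx, hxsa, hx0⟩,
        ⟨y, doubleAnnihilator_subset hb hy, hysa, hy0⟩,
        doubleAnnihilator_subset hx, doubleAnnihilator_subset hy, hxy⟩)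
  exact ⟨fun n => s n, fun n => (s n).2.2.1, fun n => (s n).2.2.2, hs⟩

variable {A : Type*} [NonUnitalCStarAlgebra A]

theorem exists_isOrthogonalFamily_or_exists_isMinimalProjection {a : A} (ha : IsSelfAdjoint a)
    (ha0 : a ≠ 0) :
    (∃ s : ℕ → A, IsOrthogonalFamily s) ∨ ∃ p ∈ doubleAnnihilator a, IsMinimalProjection ℂ p := by
  by_cases h : ∃ b ∈ doubleAnnihilator a, IsSelfAdjoint b ∧ b ≠ 0 ∧
      NoSelfAdjointZeroDivisors (doubleAnnihilator b)
  · obtain ⟨b, hb, hbsa, hb0, hzero⟩ := h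
    obtain ⟨p, hp, hpmin⟩ :=
      hzero.exists_isMinimalProjection (self_mem_doubleAnnihilator b) hbsa hb0
    exact .inr ⟨p, doubleAnnihilator_subset hb hp, hpmin⟩
  · push Not at h
    exact .inl (exists_isOrthogonalFamily_of_forall_not_noSelfAdjointZeroDivisors ha ha0 h)

theorem exists_isMinimalProjection_mem_twoSidedAnnihilator
    (hno : ¬ ∃ s : ℕ → A, IsOrthogonalFamily s) {S : Set A} {x : A}
    (hx : x ∈ twoSidedAnnihilator S) (hx0 : x ≠ 0) (hS : ∀ s ∈ S, IsSelfAdjoint s) :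
    ∃ p ∈ twoSidedAnnihilator S, IsMinimalProjection ℂ p := by
  have hmem : star x * x ∈ twoSidedAnnihilator S :=
    star_mul_self_mem_twoSidedAnnihilator hS fun s hs => (hx s hs).1
  obtain ⟨p, hp, hpmin⟩ := (exists_isOrthogonalFamily_or_exists_isMinimalProjection
    (.star_mul_self x) (mt (CStarRing.star_mul_self_eq_zero_iff x).1 hx0)).resolve_left hno
  exact ⟨p, fun s hs => hp s (mem_twoSidedAnnihilator_singleton.2 (hmem s hs).symm), hpmin⟩

theorem exists_isOrthogonalFamily_of_not_finiteDimensional (hA : ¬ FiniteDimensional ℂ A) :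
    ∃ s : ℕ → A, IsOrthogonalFamily s := by
  let T := {p : A // IsMinimalProjection ℂ p}
  have : Std.Symm fun p q : T => p.1 * q.1 = 0 :=
    ⟨fun p q => mul_eq_zero_symm_of_isSelfAdjoint p.2.isSelfAdjoint q.2.isSelfAdjoint⟩
  obtain ⟨s, hs⟩ | ⟨F, hF, hmax⟩ :=
    exists_seq_pairwise_or_exists_maximal_finset fun p q : T => p.1 * q.1 = 0
  · exact ⟨fun n => s n, fun n => (s n).2.isSelfAdjoint, fun n => (s n).2.ne_zero, hs⟩
  by_contra hno
  refine hA (finiteDimensional_of_isMinimalProjection (p := fun p : F => p.1.1) (fun p => p.1.2)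
    (fun p q hpq => hF p.2 q.2 (Subtype.coe_injective.ne hpq)) fun x hx => ?_)
  by_contra hx0
  obtain ⟨p, hp, hpmin⟩ := exists_isMinimalProjection_mem_twoSidedAnnihilator hno hx hx0
    (Set.forall_mem_range.2 fun q => q.1.2.isSelfAdjoint)
  have hpF : (⟨p, hpmin⟩ : T) ∈ F := hmax ⟨p, hpmin⟩ fun q hq => (hp q.1 ⟨⟨q, hq⟩, rfl⟩).1
  have hpp : p * p = 0 := (hp p ⟨⟨⟨p, hpmin⟩, hpF⟩, rfl⟩).1
  exact hpmin.ne_zero (hpmin.isIdempotentElem.eq.symm.trans hpp)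

end OrthogonalFamily

/-- Every infinite-dimensional C*-algebra contains an infinite sequence of
mutually orthogonal nonzero hereditary C*-subalgebras. -/
theorem exists_orthogonal_sequence_of_hereditary_subalgebras
    {A : Type*} [NonUnitalCStarAlgebra A] [PartialOrder A] [StarOrderedRing A]
    (hA : ¬ FiniteDimensional ℂ A) :
    ∃ B : ℕ → Set A, (∀ n, IsHereditarySubalgebra (B n)) ∧ (∀ n, B n ≠ {0}) ∧
      ∀ n m : ℕ, n ≠ m → ∀ x ∈ B n, ∀ y ∈ B m, x * y = 0 := by
  obtain ⟨a, ha⟩ := exists_isOrthogonalFamily_of_not_finiteDimensional hA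
  refine ⟨fun n => doubleAnnihilator (a n),
    fun n => isHereditarySubalgebra_doubleAnnihilator (ha.isSelfAdjoint n), fun n hn => ?_,
    fun n m hnm x hx y hy => ?_⟩
  · have hmem : a n ∈ ({0} : Set A) := hn ▸ self_mem_doubleAnnihilator (a n)
    exact ha.ne_zero n hmem
  · exact mul_eq_zero_of_mem_doubleAnnihilator (ha.mul_eq_zero hnm) (ha.mul_eq_zero hnm.symm) hx hy
end

section
/- If a C*-algebra A is locally unital, then QM(A) = M(A): every quasi-centralizer of A comes from a multiplier. (No σ-unitality assumption is needed.) -/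
/-- A quasi-centralizer of `A`: a continuous bilinear map `m : A × A → A` satisfying
`m (a*x) (y*b) = a * m x y * b` for all `a x y b`. -/
def IsQuasiCentralizer {A : Type*} [NonUnitalNormedRing A] [NormedSpace ℂ A]
    (m : A →L[ℂ] A →L[ℂ] A) : Prop :=
  ∀ a x y b : A, m (a * x) (y * b) = a * m x y * b

/-- The quasi-centralizer `m` comes from a multiplier, i.e. there is a double centralizer
`(L, R)` of `A` with `m x y = x * L y`. -/
def ComesFromMultiplier {A : Type*} [NonUnitalNormedRing A] [NormedSpace ℂ A]
    (m : A →L[ℂ] A →L[ℂ] A) : Prop :=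
  ∃ L R : A →L[ℂ] A, (∀ x y : A, R x * y = x * L y) ∧ ∀ x y : A, m x y = x * L y

/-- `QM(A) = M(A)`: every quasi-centralizer of `A` comes from a multiplier. -/
def QMeqM (A : Type*) [NonUnitalNormedRing A] [NormedSpace ℂ A] : Prop :=
  ∀ m : A →L[ℂ] A →L[ℂ] A, IsQuasiCentralizer m → ComesFromMultiplier m

/-- The C*-algebra `A` is locally unital: there is a family of closed two-sided ideals
whose sum is dense in `A`, each possessing a local unit. -/
def IsLocallyUnital (A : Type*) [NonUnitalCStarAlgebra A] : Prop :=
  ∃ (ι : Type) (I : ι → Set A),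
    (∀ j, IsClosedTwoSidedIdeal (I j)) ∧
    Dense (Submodule.span ℂ (⋃ j, I j) : Set A) ∧
    ∀ j, ∃ u : A, ∀ x ∈ I j, u * x = x ∧ x * u = x

open Filter Topology

lemma norm_sub_mul_sq_le {A : Type*} [NonUnitalNormedRing A] [StarRing A] [CStarRing A]
    (y : A) {e : A} (he : ‖e‖ ≤ 1) :
    ‖y - y * e‖ ^ 2 ≤ 2 * ‖star y * y - star y * y * e‖ := by
  set d := star y * y - star y * y * e
  calc ‖y - y * e‖ ^ 2 = ‖star (y - y * e) * (y - y * e)‖ := by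
        rw [CStarRing.norm_star_mul_self, sq]
    _ = ‖d - star e * d‖ := by
        simp only [d, star_sub, star_mul, sub_mul, mul_sub, mul_assoc]
        congr 1
        abel
    _ ≤ ‖d‖ + ‖star e‖ * ‖d‖ := (norm_sub_le _ _).trans (by gcongr; exact norm_mul_le _ _)
    _ ≤ ‖d‖ + 1 * ‖d‖ := by rw [norm_star]; gcongr
    _ = 2 * ‖d‖ := by ring

section ApproximateUnit

variable {A : Type*} [NonUnitalCStarAlgebra A]

variable (A) in
lemma exists_isApproximateUnit_norm_le_one :
    ∃ l : Filter A, l.IsApproximateUnit ∧ ∀ᶠ e in l, ‖e‖ ≤ 1 := by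
  let _ := CStarAlgebra.spectralOrder A
  let _ := CStarAlgebra.spectralOrderedRing A
  have hl := CStarAlgebra.increasingApproximateUnit A
  exact ⟨_, hl.toIsApproximateUnit, hl.eventually_norm⟩

lemma mem_closure_mul_elemental_star_mul_self (y : A) :
    y ∈ closure ((y * ·) '' (NonUnitalStarAlgebra.elemental ℂ (star y * y) : Set A)) := by
  set B := NonUnitalStarAlgebra.elemental ℂ (star y * y)
  let b : B := ⟨star y * y, NonUnitalStarAlgebra.elemental.self_mem ℂ _⟩
  obtain ⟨l, hl, hl_norm⟩ := exists_isApproximateUnit_norm_le_one B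
  have := hl.neBot
  have hb : Tendsto (fun e : B => 2 * ‖b - b * e‖) l (𝓝 0) := by
    simpa using ((hl.tendsto_mul_left b).const_sub b).norm.const_mul 2
  have hsq : Tendsto (fun e : B => ‖y - y * e‖ ^ 2) l (𝓝 0) :=
    squeeze_zero' (.of_forall fun _ => sq_nonneg _)
      (hl_norm.mono fun e he => norm_sub_mul_sq_le y he) hb
  have hy : Tendsto (fun e : B => y * (e : A)) l (𝓝 y) := by
    rw [tendsto_iff_norm_sub_tendsto_zero]
    simpa [norm_sub_rev] using hsq.sqrt
  exact mem_closure_of_tendsto hy (.of_forall fun e => Set.mem_image_of_mem _ e.2)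

end ApproximateUnit

namespace IsClosedTwoSidedIdeal

variable {A : Type*} [NonUnitalCStarAlgebra A] {I : Set A}

lemma sub_mem (hI : IsClosedTwoSidedIdeal I) {x y : A} (hx : x ∈ I) (hy : y ∈ I) :
    x - y ∈ I := by
  simpa [sub_eq_add_neg] using hI.add_mem _ _ hx (hI.smul_mem (-1) y hy)

/-- The `⋆`-subalgebra `I ∩ star I` of a closed two-sided ideal `I`. It contains `star y * y` for
`y ∈ I`, which is how `I` is shown to be closed under `star`, so that in fact `I ∩ star I = I`. -/
def interStar (hI : IsClosedTwoSidedIdeal I) : NonUnitalStarSubalgebra ℂ A where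
  carrier := I ∩ star ⁻¹' I
  zero_mem' := by simp [hI.zero_mem]
  add_mem' hx hy := ⟨hI.add_mem _ _ hx.1 hy.1, by simpa using hI.add_mem _ _ hx.2 hy.2⟩
  smul_mem' c x hx := ⟨hI.smul_mem c x hx.1, by simpa using hI.smul_mem (star c) _ hx.2⟩
  mul_mem' hx hy := ⟨hI.mul_mem_left _ _ hy.1, by simpa using hI.mul_mem_left _ _ hx.2⟩
  star_mem' hx := ⟨hx.2, by simpa using hx.1⟩

lemma elemental_star_mul_self_le_interStar (hI : IsClosedTwoSidedIdeal I) {y : A} (hy : y ∈ I) :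
    NonUnitalStarAlgebra.elemental ℂ (star y * y) ≤ hI.interStar := by
  refine NonUnitalStarAlgebra.elemental.le_of_mem
    (hI.isClosed.inter (hI.isClosed.preimage continuous_star)) ?_
  exact ⟨hI.mul_mem_left _ _ hy, by simpa using hI.mul_mem_left (star y) y hy⟩

lemma mem_closure_mul_interStar (hI : IsClosedTwoSidedIdeal I) {y : A} (hy : y ∈ I) :
    y ∈ closure ((y * ·) '' (hI.interStar : Set A)) :=
  closure_mono (Set.image_mono (hI.elemental_star_mul_self_le_interStar hy))
    (mem_closure_mul_elemental_star_mul_self y)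

lemma star_mem (hI : IsClosedTwoSidedIdeal I) {y : A} (hy : y ∈ I) : star y ∈ I := by
  rw [← hI.isClosed.closure_eq]
  refine map_mem_closure continuous_star (hI.mem_closure_mul_interStar hy) ?_
  rintro _ ⟨e, he, rfl⟩
  simpa using hI.mul_mem_right (star y) (star e) he.2

lemma mem_closure_mul_right (hI : IsClosedTwoSidedIdeal I) {y : A} (hy : y ∈ I) :
    y ∈ closure ((y * ·) '' I) :=
  closure_mono (Set.image_mono Set.inter_subset_left) (hI.mem_closure_mul_interStar hy)

lemma mem_closure_mul_left (hI : IsClosedTwoSidedIdeal I) {x : A} (hx : x ∈ I) :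
    x ∈ closure ((· * x) '' I) := by
  rw [← star_star x]
  refine map_mem_closure continuous_star (hI.mem_closure_mul_right (hI.star_mem hx)) ?_
  rintro _ ⟨e, he, rfl⟩
  exact ⟨star e, hI.star_mem he, by simp⟩

lemma eq_of_forall_mul_left_eq (hI : IsClosedTwoSidedIdeal I) {v w : A} (hv : v ∈ I) (hw : w ∈ I)
    (h : ∀ a ∈ I, a * v = a * w) : v = w := by
  rw [← sub_eq_zero, ← CStarRing.star_mul_self_eq_zero_iff, mul_sub, sub_eq_zero]
  exact h _ (hI.star_mem (hI.sub_mem hv hw))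

lemma eq_of_forall_mul_right_eq (hI : IsClosedTwoSidedIdeal I) {v w : A} (hv : v ∈ I) (hw : w ∈ I)
    (h : ∀ a ∈ I, v * a = w * a) : v = w := by
  rw [← sub_eq_zero, ← CStarRing.mul_star_self_eq_zero_iff, sub_mul, sub_eq_zero]
  exact h _ (hI.star_mem (hI.sub_mem hv hw))

end IsClosedTwoSidedIdeal

namespace IsQuasiCentralizer

section NormedRing

variable {A : Type*} [NonUnitalNormedRing A] [NormedSpace ℂ A] {m : A →L[ℂ] A →L[ℂ] A}
  {l : Filter A}

lemma map_mul_left (hm : IsQuasiCentralizer m) (hl : l.IsApproximateUnit) (a x y : A) :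
    m (a * x) y = a * m x y := by
  have := hl.neBot
  have hlim : Tendsto (fun e => m (a * x) (y * e)) l (𝓝 (m (a * x) y)) :=
    ((m (a * x)).continuous.tendsto y).comp (hl.tendsto_mul_left y)
  simp only [hm a x y] at hlim
  exact tendsto_nhds_unique hlim (hl.tendsto_mul_left (a * m x y))

lemma map_mul_right (hm : IsQuasiCentralizer m) (hl : l.IsApproximateUnit) (x y b : A) :
    m x (y * b) = m x y * b := by
  have := hl.neBot
  have hlim : Tendsto (fun e => m (e * x) (y * b)) l (𝓝 (m x (y * b))) :=
    ((m.flip (y * b)).continuous.tendsto x).comp (hl.tendsto_mul_right x)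
  simp only [hm _ x y b, mul_assoc] at hlim
  exact tendsto_nhds_unique hlim (hl.tendsto_mul_right (m x y * b))

end NormedRing

variable {A : Type*} [NonUnitalCStarAlgebra A] {m : A →L[ℂ] A →L[ℂ] A} {I : Set A} {u x y : A}

lemma map_mem_of_left_mem (hm : IsQuasiCentralizer m) (hI : IsClosedTwoSidedIdeal I)
    (hx : x ∈ I) (y : A) : m x y ∈ I := by
  obtain ⟨l, hl, -⟩ := exists_isApproximateUnit_norm_le_one A
  rw [← hI.isClosed.closure_eq]
  refine map_mem_closure (f := (m · y)) (m.flip y).continuous (hI.mem_closure_mul_left hx) ?_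
  rintro _ ⟨e, he, rfl⟩
  simpa [hm.map_mul_left hl] using hI.mul_mem_right (m x y) e he

lemma map_mem_of_right_mem (hm : IsQuasiCentralizer m) (hI : IsClosedTwoSidedIdeal I)
    (x : A) (hy : y ∈ I) : m x y ∈ I := by
  obtain ⟨l, hl, -⟩ := exists_isApproximateUnit_norm_le_one A
  rw [← hI.isClosed.closure_eq]
  refine map_mem_closure (m x).continuous (hI.mem_closure_mul_right hy) ?_
  rintro _ ⟨e, he, rfl⟩
  simpa [hm.map_mul_right hl] using hI.mul_mem_left (m x y) e he

lemma eq_mul_map_of_right_mem (hm : IsQuasiCentralizer m) (hI : IsClosedTwoSidedIdeal I)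
    (hu : ∀ a ∈ I, a * u = a) (x : A) (hy : y ∈ I) : m x y = x * m u y := by
  obtain ⟨l, hl, -⟩ := exists_isApproximateUnit_norm_le_one A
  refine hI.eq_of_forall_mul_left_eq (hm.map_mem_of_right_mem hI x hy)
    (hI.mul_mem_left _ _ (hm.map_mem_of_right_mem hI u hy)) fun a ha => ?_
  calc a * m x y = m (a * x) y := (hm.map_mul_left hl a x y).symm
    _ = m (a * x * u) y := by rw [hu _ (hI.mul_mem_right x a ha)]
    _ = a * (x * m u y) := by rw [hm.map_mul_left hl, mul_assoc]

lemma eq_map_mul_of_left_mem (hm : IsQuasiCentralizer m) (hI : IsClosedTwoSidedIdeal I)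
    (hu : ∀ a ∈ I, u * a = a) (hx : x ∈ I) (y : A) : m x y = m x u * y := by
  obtain ⟨l, hl, -⟩ := exists_isApproximateUnit_norm_le_one A
  refine hI.eq_of_forall_mul_right_eq (hm.map_mem_of_left_mem hI hx y)
    (hI.mul_mem_right _ _ (hm.map_mem_of_left_mem hI hx u)) fun a ha => ?_
  calc m x y * a = m x (y * a) := (hm.map_mul_right hl x y a).symm
    _ = m x (u * (y * a)) := by rw [hu _ (hI.mul_mem_left y a ha)]
    _ = m x u * y * a := by rw [hm.map_mul_right hl, mul_assoc]

end IsQuasiCentralizer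

lemma exists_lift_of_isometry_of_dense_span {𝕜 E F G : Type*} [NontriviallyNormedField 𝕜]
    [NormedAddCommGroup E] [NormedSpace 𝕜 E] [CompleteSpace E]
    [SeminormedAddCommGroup F] [NormedSpace 𝕜 F] [NormedAddCommGroup G] [NormedSpace 𝕜 G]
    {f : E →L[𝕜] G} (hf : Isometry f) (g : F →L[𝕜] G) {s : Set F}
    (hs : Dense (Submodule.span 𝕜 s : Set F)) (h : ∀ y ∈ s, g y ∈ f.range) :
    ∃ L : F →L[𝕜] E, ∀ y, f (L y) = g y := by
  have hclosed : IsClosed (g ⁻¹' f.range) :=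
    hf.isClosedEmbedding.isClosed_range.preimage g.continuous
  have hspan : Submodule.span 𝕜 s ≤ f.range.comap (g : F →ₗ[𝕜] G) := Submodule.span_le.2 h
  have hrange (y : F) : g y ∈ f.range := closure_minimal hspan hclosed (hs y)
  let f' : E →ₗᵢ[𝕜] G := ⟨f, hf.norm_map_of_map_zero (map_zero f)⟩
  let e : E ≃ₗᵢ[𝕜] f.range := f'.equivRange
  refine ⟨(e.symm : f.range →L[𝕜] E).comp (g.codRestrict f.range hrange), fun y => ?_⟩
  exact congrArg Subtype.val (e.apply_symm_apply ⟨g y, hrange y⟩)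

/-- If a C*-algebra `A` is locally unital, then `QM(A) = M(A)`. -/
theorem QMeqM_of_isLocallyUnital
    {A : Type*} [NonUnitalCStarAlgebra A] (hA : IsLocallyUnital A) :
    QMeqM A := by
  obtain ⟨ι, I, hI, hdense, hunit⟩ := hA
  intro m hm
  obtain ⟨L, hL⟩ := exists_lift_of_isometry_of_dense_span
    (ContinuousLinearMap.isometry_mul_flip ℂ A) m.flip hdense fun y hy => by
      obtain ⟨j, hj⟩ := Set.mem_iUnion.1 hy
      obtain ⟨u, hu⟩ := hunit j
      exact ⟨m u y, ContinuousLinearMap.ext fun x =>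
        (hm.eq_mul_map_of_right_mem (hI j) (fun a ha => (hu a ha).2) x hj).symm⟩
  obtain ⟨R, hR⟩ := exists_lift_of_isometry_of_dense_span
    (ContinuousLinearMap.isometry_mul ℂ A) m hdense fun x hx => by
      obtain ⟨j, hj⟩ := Set.mem_iUnion.1 hx
      obtain ⟨u, hu⟩ := hunit j
      exact ⟨m x u, ContinuousLinearMap.ext fun y =>
        (hm.eq_map_mul_of_left_mem (hI j) (fun a ha => (hu a ha).1) hj y).symm⟩
  have hL' (x y : A) : x * L y = m x y := DFunLike.congr_fun (hL y) x
  have hR' (x y : A) : R x * y = m x y := DFunLike.congr_fun (hR x) y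
  exact ⟨L, R, fun x y => (hR' x y).trans (hL' x y).symm, fun x y => (hL' x y).symm⟩
end

section
/- Let H₁ and H₂ be separable infinite-dimensional complex Hilbert spaces, and let A and B be σ-unital closed *-subalgebras of B(H₁) and B(H₂) respectively with K(H₁) ⊆ A and K(H₂) ⊆ B. Define LM(X) = {T ∈ B(H₂,H₁) : T∘b is compact for all b ∈ B} and RM(X) = {T ∈ B(H₂,H₁) : a∘T is compact for all a ∈ A}. Then LM(X) ⊆ RM(X) if and only if either the identity operator on H₂ belongs to B or A = K(H₁). -/
/-!
Right to left, `1 ∈ B` makes every `T ∈ LM(X)` compact, and `A = K(H₁)` makes every `a ∘ T` compact.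

For the converse, suppose that `1 ∉ B` and that some `a ∈ A` is not compact. Let `e ∈ B` be positive
with `e B` dense in `B`. As `B` contains the rank-one operators, `e` has dense range; it is not
surjective, since otherwise it would be invertible and `e B` closed, whence `1 ∈ B`. An operator
with dense proper range is not bounded below on any closed subspace of finite codimension, so there
is an orthonormal sequence `v` in `H₂` with `∑ ‖e (v n)‖ < ∞`. Dually, since `a` is not a norm limit
of finite-rank operators, there is an orthonormal sequence `w` in `H₁` with `‖a (w n)‖ ≥ δ > 0`.

Let `T` be the partial isometry `∑ |w n⟩⟨v n|`. The series `T e = ∑ |w n⟩⟨e (v n)|` converges in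
norm, so `T e` is compact, and hence so is `T b` for every `b ∈ B`, by density of `e B`. But `a T`
is not compact: it maps `v n` to `a (w n)`, whereas a compact operator maps orthonormal sequences to
null sequences.
-/

/-- A closed *-subalgebra of `B(H)`, given as a set: a norm-closed linear subspace closed
under composition and Hilbert-space adjoints. -/
structure IsClosedStarSubalgebraOfOperators {H : Type*} [NormedAddCommGroup H]
    [InnerProductSpace ℂ H] [CompleteSpace H] (A : Set (H →L[ℂ] H)) : Prop where
  isClosed : IsClosed A
  zero_mem : (0 : H →L[ℂ] H) ∈ A
  add_mem : ∀ x y : H →L[ℂ] H, x ∈ A → y ∈ A → x + y ∈ A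
  smul_mem : ∀ (c : ℂ) (x : H →L[ℂ] H), x ∈ A → c • x ∈ A
  mul_mem : ∀ x y : H →L[ℂ] H, x ∈ A → y ∈ A → x.comp y ∈ A
  star_mem : ∀ x : H →L[ℂ] H, x ∈ A → ContinuousLinearMap.adjoint x ∈ A

/-- The operator algebra `A` is σ-unital: it contains a positive element `e` such that
`{e ∘ a : a ∈ A}` is dense in `A`. -/
def IsSigmaUnitalOperatorAlgebra {H : Type*} [NormedAddCommGroup H]
    [InnerProductSpace ℂ H] [CompleteSpace H] (A : Set (H →L[ℂ] H)) : Prop :=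
  ∃ e ∈ A, e.IsPositive ∧ A ⊆ closure {x : H →L[ℂ] H | ∃ a ∈ A, x = e.comp a}

open Filter Topology InnerProductSpace ContinuousLinearMap

section Orthonormal

variable {ι 𝕜 E F : Type*} [RCLike 𝕜] [NormedAddCommGroup E] [InnerProductSpace 𝕜 E]

theorem exists_orthonormal_of_forall_finiteDimensional {p : ℕ → E → Prop}
    (h : ∀ (n : ℕ) (M : Submodule 𝕜 E) [FiniteDimensional 𝕜 M], ∃ x ∈ Mᗮ, ‖x‖ = 1 ∧ p n x) :
    ∃ v : ℕ → E, Orthonormal 𝕜 v ∧ ∀ n, p n (v n) := by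
  classical
  have hspan (n : ℕ) (s : Finset E) :
      ∃ x ∈ (Submodule.span 𝕜 (s : Set E))ᗮ, ‖x‖ = 1 ∧ p n x := h n _
  choose next next_mem norm_next p_next using hspan
  let s : ℕ → Finset E := fun n => n.rec ∅ fun k t => insert (next k t) t
  have s_mono : Monotone s := monotone_nat_of_le_succ fun n => Finset.subset_insert _ _
  have inner_eq_zero {m n : ℕ} (hmn : m < n) :
      inner 𝕜 (next m (s m)) (next n (s n)) = 0 :=
    (Submodule.mem_orthogonal _ _).1 (next_mem n (s n)) _ <|
      Submodule.subset_span (s_mono hmn (Finset.mem_insert_self _ _))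
  refine ⟨fun n => next n (s n), ⟨fun n => norm_next n _, fun m n hmn => ?_⟩, fun n => p_next n _⟩
  rcases hmn.lt_or_gt with hlt | hgt
  · exact inner_eq_zero hlt
  · exact inner_eq_zero_symm.1 (inner_eq_zero hgt)

theorem apply_eq_of_hasSum_inner_smul [NormedAddCommGroup F] [NormedSpace 𝕜 F] {v : ι → E}
    {w : ι → F} (hv : Orthonormal 𝕜 v) {T : E → F}
    (hT : ∀ y, HasSum (fun i => inner 𝕜 (v i) y • w i) (T y)) (i : ι) :
    T (v i) = w i := by
  refine (hT (v i)).unique ?_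
  convert hasSum_single i fun j hj => ?_ using 1
  · simp [hv.norm_eq_one i]
  · simp [hv.inner_eq_zero hj]

variable [CompleteSpace E]

theorem tendsto_dual_apply_of_orthonormal {v : ι → E} (hv : Orthonormal 𝕜 v)
    (φ : StrongDual 𝕜 E) : Tendsto (fun i => φ (v i)) cofinite (𝓝 0) := by
  obtain ⟨y, rfl⟩ := (toDual 𝕜 E).surjective φ
  have hsq := (hv.inner_products_summable (x := y)).tendsto_cofinite_zero
  rw [tendsto_zero_iff_norm_tendsto_zero]
  simpa [norm_inner_symm y] using hsq.sqrt

theorem tendsto_apply_zero_of_orthonormal_of_isCompactOperator [NormedAddCommGroup F]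
    [NormedSpace 𝕜 F] {v : ι → E} (hv : Orthonormal 𝕜 v) {S : E →L[𝕜] F}
    (hS : IsCompactOperator S) : Tendsto (fun i => S (v i)) cofinite (𝓝 0) := by
  refine (hS.isCompact_closure_image_closedBall 1).tendsto_nhds_of_unique_mapClusterPt
    (.of_forall fun i => subset_closure ⟨v i, by simp [hv.norm_eq_one], rfl⟩) fun z _ hz => ?_
  refine SeparatingDual.eq_zero_of_forall_dual_eq_zero (R := 𝕜) fun φ => ?_
  have hcluster : MapClusterPt (φ z) cofinite fun i => φ (S (v i)) :=
    hz.continuousAt_comp φ.continuous.continuousAt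
  exact eq_of_nhds_neBot <|
    ClusterPt.mono hcluster (tendsto_dual_apply_of_orthonormal hv (φ ∘L S))

variable [NormedAddCommGroup F] [InnerProductSpace 𝕜 F] [CompleteSpace F]

theorem exists_hasSum_inner_smul {v : ι → E} {w : ι → F} (hv : Orthonormal 𝕜 v)
    (hw : Orthonormal 𝕜 w) :
    ∃ T : E →L[𝕜] F, ∀ y, HasSum (fun i => inner 𝕜 (v i) y • w i) (T y) := by
  classical
  let V := hv.orthogonalFamily.linearIsometry.toContinuousLinearMap
  let W := hw.orthogonalFamily.linearIsometry.toContinuousLinearMap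
  have coord (y : E) (i : ι) : (adjoint V y) i = inner 𝕜 (v i) y := by
    have hVi : V (lp.single 2 i 1) = v i := by simp [V]
    rw [← hVi, ← adjoint_inner_right, lp.inner_single_left]
    simp
  refine ⟨W ∘L adjoint V, fun y => ?_⟩
  simpa [coord, W] using hw.orthogonalFamily.hasSum_linearIsometry (adjoint V y)

end Orthonormal

section CompactOperator

variable {ι 𝕜 E F G : Type*} [RCLike 𝕜] [NormedAddCommGroup E] [InnerProductSpace 𝕜 E]
  [NormedAddCommGroup F] [NormedSpace 𝕜 F]

theorem isCompactOperator_rankOne (x : F) (y : E) : IsCompactOperator (rankOne 𝕜 x y) :=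
  (isCompactOperator_of_locallyCompactSpace_rng (toSpanSingleton 𝕜 x)).comp_clm (innerSL 𝕜 y)

theorem isCompactOperator_comp_of_summable [CompleteSpace E] [CompleteSpace F]
    [NormedAddCommGroup G] [InnerProductSpace 𝕜 G] [CompleteSpace G] {e : E →L[𝕜] G} {v : ι → G}
    {w : ι → F} {T : G →L[𝕜] F} (hT : ∀ y, HasSum (fun i => inner 𝕜 (v i) y • w i) (T y))
    (hsum : Summable fun i => ‖w i‖ * ‖adjoint e (v i)‖) : IsCompactOperator (T ∘L e) := by
  have hrank : Summable fun i => rankOne 𝕜 (w i) (adjoint e (v i)) :=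
    .of_norm (by simpa using hsum)
  have heq : T ∘L e = ∑' i, rankOne 𝕜 (w i) (adjoint e (v i)) := by
    ext y
    refine (hT (e y)).unique ?_
    simpa [adjoint_inner_left] using hrank.hasSum.mapL (ContinuousLinearMap.apply 𝕜 F y)
  rw [heq]
  exact isCompactOperator_of_tendsto hrank.hasSum <| .of_forall fun s =>
    Submodule.sum_mem (compactOperator (RingHom.id 𝕜) E F) fun i _ => isCompactOperator_rankOne _ _

theorem exists_mem_orthogonal_norm_apply_le [CompleteSpace E] {T : E →L[𝕜] F}
    (hdense : DenseRange T) (hsurj : ¬ Function.Surjective T) {ε : ℝ} (hε : 0 < ε)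
    (M : Submodule 𝕜 E) [FiniteDimensional 𝕜 M] : ∃ x ∈ Mᗮ, ‖x‖ = 1 ∧ ‖T x‖ ≤ ε := by
  -- If `T` were bounded below on `Mᗮ`, its range `T(Mᗮ) + T(M)` would be closed.
  by_contra! hcon
  apply hsurj
  have hanti : AntilipschitzWith (Real.toNNReal ε⁻¹) (T ∘L Mᗮ.subtypeL) := by
    refine antilipschitz_of_bound_of_norm_one (𝕜 := 𝕜) _ fun x hx => ?_
    rw [Real.coe_toNNReal _ (inv_pos.2 hε).le, inv_mul_eq_div, one_le_div hε]
    exact (hcon x x.2 (by simpa using hx)).le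
  have hclosed : IsClosed (Mᗮ.map (T : E →ₗ[𝕜] F) : Set F) := by
    convert hanti.isClosed_range (T ∘L Mᗮ.subtypeL).uniformContinuous using 1
    ext y
    simp
  have hrange : IsClosed (Set.range T) := by
    have := Submodule.isClosed_sup_finiteDimensional _ (M.map (T : E →ₗ[𝕜] F)) hclosed
    rwa [← Submodule.map_sup, sup_comm, Submodule.sup_orthogonal_of_hasOrthogonalProjection,
      Submodule.map_top, LinearMap.coe_range] at this
  rw [← Set.range_eq_univ, ← hrange.closure_eq, hdense.closure_range]

theorem exists_forall_mem_orthogonal_le_norm_apply [CompleteSpace F] {a : E →L[𝕜] F}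
    (ha : ¬ IsCompactOperator a) : ∃ δ > 0, ∀ (M : Submodule 𝕜 E) [FiniteDimensional 𝕜 M],
      ∃ x ∈ Mᗮ, ‖x‖ = 1 ∧ δ ≤ ‖a x‖ := by
  obtain ⟨ε, hε, hfar⟩ : ∃ ε > 0, ∀ S : E →L[𝕜] F, IsCompactOperator S → ε ≤ ‖a - S‖ := by
    have hclosed := isClosed_setOfPred_isCompactOperator (σ₁₂ := RingHom.id 𝕜) (M₁ := E) (M₂ := F)
    obtain ⟨ε, hε, hball⟩ := Metric.isOpen_iff.1 hclosed.isOpen_compl a ha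
    refine ⟨ε, hε, fun S hS => ?_⟩
    by_contra! hlt
    exact hball (by rwa [mem_ball_iff_norm']) hS
  refine ⟨ε / 2, half_pos hε, fun M _ => ?_⟩
  -- The compact operator `a P_M` would otherwise lie within `ε / 2` of `a`.
  by_contra! hcon
  have hcompact : IsCompactOperator (a ∘L M.starProjection) :=
    (isCompactOperator_of_locallyCompactSpace_rng (a ∘L M.subtypeL)).comp_clm
      M.orthogonalProjectionOnto
  have hsmall : ‖a ∘L Mᗮ.subtypeL‖ ≤ ε / 2 :=
    opNorm_le_of_unit_norm (half_pos hε).le fun x hx => (hcon x x.2 (by simpa using hx)).le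
  have : ε ≤ ε / 2 := calc
    ε ≤ ‖a - a ∘L M.starProjection‖ := hfar _ hcompact
    _ = ‖(a ∘L Mᗮ.subtypeL) ∘L Mᗮ.orthogonalProjectionOnto‖ := by
      congr 1
      ext x
      simp
    _ ≤ ‖a ∘L Mᗮ.subtypeL‖ * ‖Mᗮ.orthogonalProjectionOnto‖ := opNorm_comp_le _ _
    _ ≤ ε / 2 * 1 := by gcongr; exact Mᗮ.orthogonalProjectionOnto_norm_le
    _ = ε / 2 := mul_one _
  linarith

theorem exists_orthonormal_summable_norm_apply [CompleteSpace E] {T : E →L[𝕜] F}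
    (hdense : DenseRange T) (hsurj : ¬ Function.Surjective T) :
    ∃ v : ℕ → E, Orthonormal 𝕜 v ∧ Summable fun n => ‖T (v n)‖ := by
  obtain ⟨v, hv, hle⟩ := exists_orthonormal_of_forall_finiteDimensional (𝕜 := 𝕜)
    (p := fun n x => ‖T x‖ ≤ (1 / 2) ^ n) fun n M _ =>
      exists_mem_orthogonal_norm_apply_le hdense hsurj (by positivity) M
  exact ⟨v, hv, .of_nonneg_of_le (fun _ => norm_nonneg _) hle summable_geometric_two⟩

theorem exists_orthonormal_forall_le_norm_apply [CompleteSpace F] {a : E →L[𝕜] F}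
    (ha : ¬ IsCompactOperator a) :
    ∃ δ > 0, ∃ w : ℕ → E, Orthonormal 𝕜 w ∧ ∀ n, δ ≤ ‖a (w n)‖ := by
  obtain ⟨δ, hδ, hlarge⟩ := exists_forall_mem_orthogonal_le_norm_apply ha
  exact ⟨δ, hδ, exists_orthonormal_of_forall_finiteDimensional fun _ => hlarge⟩

end CompactOperator

section MultiplierConstruction

variable {𝕜 E F G Y : Type*} [RCLike 𝕜]
  [NormedAddCommGroup E] [InnerProductSpace 𝕜 E] [CompleteSpace E]
  [NormedAddCommGroup F] [InnerProductSpace 𝕜 F] [CompleteSpace F]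
  [NormedAddCommGroup G] [InnerProductSpace 𝕜 G] [CompleteSpace G]
  [NormedAddCommGroup Y] [NormedSpace 𝕜 Y] [CompleteSpace Y]

theorem exists_isCompactOperator_comp_and_not_isCompactOperator_comp {e : E →L[𝕜] G}
    (hdense : DenseRange (adjoint e)) (hsurj : ¬ Function.Surjective (adjoint e))
    {a : F →L[𝕜] Y} (ha : ¬ IsCompactOperator a) :
    ∃ T : G →L[𝕜] F, IsCompactOperator (T ∘L e) ∧ ¬ IsCompactOperator (a ∘L T) := by
  obtain ⟨v, hv, hsum⟩ := exists_orthonormal_summable_norm_apply hdense hsurj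
  obtain ⟨δ, hδ, w, hw, hlarge⟩ := exists_orthonormal_forall_le_norm_apply ha
  obtain ⟨T, hT⟩ := exists_hasSum_inner_smul hv hw
  refine ⟨T, isCompactOperator_comp_of_summable hT (by simpa [hw.norm_eq_one] using hsum),
    fun haT => ?_⟩
  have hlim : Tendsto (fun n => a (w n)) cofinite (𝓝 0) := by
    simpa [apply_eq_of_hasSum_inner_smul hv hT] using
      tendsto_apply_zero_of_orthonormal_of_isCompactOperator hv haT
  have : δ ≤ ‖(0 : Y)‖ := ge_of_tendsto' hlim.norm hlarge
  exact hδ.not_ge (by simpa using this)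

end MultiplierConstruction

section DenseComp

variable {𝕜 E F G : Type*} [NontriviallyNormedField 𝕜] [NormedAddCommGroup E] [NormedSpace 𝕜 E]
  [NormedAddCommGroup F] [NormedSpace 𝕜 F] [NormedAddCommGroup G] [NormedSpace 𝕜 G]

theorem isCompactOperator_comp_of_mem_closure [CompleteSpace G] {S : Set (E →L[𝕜] F)}
    {T : F →L[𝕜] G} (hS : ∀ b ∈ S, IsCompactOperator (T ∘L b)) {b : E →L[𝕜] F}
    (hb : b ∈ closure S) :
    IsCompactOperator (T ∘L b) :=
  closure_minimal hS
    (isClosed_setOfPred_isCompactOperator.preimage (f := fun b => T ∘L b) (by fun_prop)) hb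

theorem range_subset_closure_range_of_mem_closure_comp {e : F →L[𝕜] E} {B : Set (E →L[𝕜] F)}
    {T : E →L[𝕜] E} (hT : T ∈ closure ((e ∘L ·) '' B)) :
    Set.range T ⊆ closure (Set.range e) := by
  rintro _ ⟨x, rfl⟩
  refine map_mem_closure (f := fun S : E →L[𝕜] E => S x) (by fun_prop) hT ?_
  rintro _ ⟨b, -, rfl⟩
  exact ⟨b x, rfl⟩

theorem id_mem_of_comp_eq_id {B : Set (E →L[𝕜] E)} (hB : IsClosed B)
    {e g : E →L[𝕜] E} (he : e ∈ closure ((e ∘L ·) '' B)) (hge : g ∘L e = .id 𝕜 E) :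
    .id 𝕜 E ∈ B := by
  rw [← hge, ← hB.closure_eq]
  refine map_mem_closure (f := fun S : E →L[𝕜] E => g ∘L S) (by fun_prop) he ?_
  rintro _ ⟨b, hb, rfl⟩
  simpa [← comp_assoc, hge] using hb

end DenseComp

section ApproximateUnit

variable {𝕜 E : Type*} [RCLike 𝕜] [NormedAddCommGroup E] [InnerProductSpace 𝕜 E]

theorem denseRange_of_isCompactOperator_mem_closure_comp {e : E →L[𝕜] E} {B : Set (E →L[𝕜] E)}
    (h : ∀ T : E →L[𝕜] E, IsCompactOperator T → T ∈ closure ((e ∘L ·) '' B)) : DenseRange e := by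
  intro x
  refine range_subset_closure_range_of_mem_closure_comp
    (h _ (isCompactOperator_rankOne x ((‖x‖ ^ 2 : 𝕜)⁻¹ • x))) ⟨x, ?_⟩
  rcases eq_or_ne x 0 with rfl | hx
  · simp
  · simp [inner_self_eq_norm_sq_to_K, hx]

theorem not_surjective_of_id_notMem [CompleteSpace E]
    {B : Set (E →L[𝕜] E)} (hB : IsClosed B) {e : E →L[𝕜] E} (hsa : IsSelfAdjoint e)
    (he : e ∈ closure ((e ∘L ·) '' B)) (hid : .id 𝕜 E ∉ B) : ¬ Function.Surjective e := by
  intro hsurj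
  have hker : e.ker = ⊥ := by
    rw [← hsa.adjoint_eq, ← orthogonal_range, LinearMap.range_eq_top.2 hsurj,
      Submodule.top_orthogonal_eq_bot]
  have hunit : IsUnit e := isUnit_iff_bijective.2 ⟨LinearMap.ker_eq_bot.1 hker, hsurj⟩
  obtain ⟨g, hg⟩ := hunit.exists_left_inv
  exact hid (id_mem_of_comp_eq_id hB he hg)

end ApproximateUnit

theorem LM_subset_RM_iff_general {𝕜 H₁ H₂ Y : Type*} [RCLike 𝕜]
    [NormedAddCommGroup H₁] [InnerProductSpace 𝕜 H₁] [CompleteSpace H₁]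
    [NormedAddCommGroup H₂] [InnerProductSpace 𝕜 H₂] [CompleteSpace H₂]
    [NormedAddCommGroup Y] [NormedSpace 𝕜 Y] [CompleteSpace Y]
    {A : Set (H₁ →L[𝕜] Y)} {B : Set (H₂ →L[𝕜] H₂)} (hB : IsClosed B)
    (hKA : ∀ T : H₁ →L[𝕜] Y, IsCompactOperator T → T ∈ A)
    (hKB : ∀ T : H₂ →L[𝕜] H₂, IsCompactOperator T → T ∈ B)
    {e : H₂ →L[𝕜] H₂} (heB : e ∈ B) (he : IsSelfAdjoint e)
    (hdense : B ⊆ closure ((e ∘L ·) '' B)) :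
    {T : H₂ →L[𝕜] H₁ | ∀ b ∈ B, IsCompactOperator (T ∘L b)} ⊆
        {T : H₂ →L[𝕜] H₁ | ∀ a ∈ A, IsCompactOperator (a ∘L T)} ↔
      (.id 𝕜 H₂ ∈ B ∨ A = {T : H₁ →L[𝕜] Y | IsCompactOperator T}) := by
  constructor
  · intro hsub
    by_contra! ⟨hid, hAK⟩
    obtain ⟨a, haA, ha⟩ : ∃ a ∈ A, ¬ IsCompactOperator a := by
      by_contra! hall
      exact hAK (Set.Subset.antisymm hall hKA)
    have hrange : DenseRange e :=
      denseRange_of_isCompactOperator_mem_closure_comp fun T hT => hdense (hKB T hT)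
    have hsurj : ¬ Function.Surjective e := not_surjective_of_id_notMem hB he (hdense heB) hid
    rw [← he.adjoint_eq] at hrange hsurj
    obtain ⟨T, hTe, haT⟩ :=
      exists_isCompactOperator_comp_and_not_isCompactOperator_comp hrange hsurj ha
    refine haT (hsub (fun b hb => ?_) a haA)
    refine isCompactOperator_comp_of_mem_closure ?_ (hdense hb)
    rintro _ ⟨c, -, rfl⟩
    exact hTe.comp_clm c
  · rintro (hid | rfl) T hT a ha
    · exact (hT _ hid).clm_comp a
    · exact ha.comp_clm T

/-- With `LM(X) = {T : T ∘ b compact ∀ b ∈ B}` and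
`RM(X) = {T : a ∘ T compact ∀ a ∈ A}`, one has `LM(X) ⊆ RM(X)` iff `1 ∈ B` or
`A = K(H₁)`. -/
theorem LM_subset_RM_iff
    {H₁ H₂ : Type*} [NormedAddCommGroup H₁] [InnerProductSpace ℂ H₁] [CompleteSpace H₁]
    [NormedAddCommGroup H₂] [InnerProductSpace ℂ H₂] [CompleteSpace H₂]
    [TopologicalSpace.SeparableSpace H₁] [TopologicalSpace.SeparableSpace H₂]
    (hH₁ : ¬ FiniteDimensional ℂ H₁) (hH₂ : ¬ FiniteDimensional ℂ H₂)
    {A : Set (H₁ →L[ℂ] H₁)} {B : Set (H₂ →L[ℂ] H₂)}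
    (hA : IsClosedStarSubalgebraOfOperators A) (hB : IsClosedStarSubalgebraOfOperators B)
    (hKA : ∀ T : H₁ →L[ℂ] H₁, IsCompactOperator T → T ∈ A)
    (hKB : ∀ T : H₂ →L[ℂ] H₂, IsCompactOperator T → T ∈ B)
    (hAσ : IsSigmaUnitalOperatorAlgebra A) (hBσ : IsSigmaUnitalOperatorAlgebra B) :
    {T : H₂ →L[ℂ] H₁ | ∀ b ∈ B, IsCompactOperator (T.comp b)} ⊆
        {T : H₂ →L[ℂ] H₁ | ∀ a ∈ A, IsCompactOperator (a.comp T)} ↔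
      (ContinuousLinearMap.id ℂ H₂ ∈ B ∨
        A = {T : H₁ →L[ℂ] H₁ | IsCompactOperator T}) := by
  obtain ⟨e, heB, hpos, hdense⟩ := hBσ
  exact LM_subset_RM_iff_general hB.isClosed hKA hKB heB hpos.isSelfAdjoint
    (by simpa only [Set.image, eq_comm] using hdense)
end
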